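/- Let p⁽¹⁾, p⁽²⁾ be probability vectors with coinciding supports and q⁽¹⁾, q⁽²⁾ be probability vectors with coinciding supports. If D_α(p⁽¹⁾‖p⁽²⁾) > D_α(q⁽¹⁾‖q⁽²⁾) and D_α(p⁽²⁾‖p⁽¹⁾) > D_α(q⁽²⁾‖q⁽¹⁾) for every α ∈ [1/2, ∞] (Rényi divergences, including the Kullback–Leibler divergence D₁ and the max-divergence D_∞), then for every sufficiently large n ∈ ℕ there exists a stochastic matrix T with T (p⁽¹⁾)^{⊗n} = (q⁽¹⁾)^{⊗n} and T (p⁽²⁾)^{⊗n} = (q⁽²⁾)^{⊗n}. -/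

import Mathlib

open scoped BigOperators NNReal

noncomputable section

/-- A probability vector on a finite index type. -/
def IsProbVec {ι : Type*} [Fintype ι] (p : ι → ℝ) : Prop :=
  (∀ i, 0 ≤ p i) ∧ ∑ i, p i = 1

/-- A (column-)stochastic matrix: nonnegative entries, every column sums to `1`. -/
def IsStochastic {ι κ : Type*} [Fintype ι] [Fintype κ] (T : ι → κ → ℝ) : Prop :=
  (∀ i j, 0 ≤ T i j) ∧ ∀ j, ∑ i, T i j = 1

/-- Matrix–vector multiplication. -/
def matVec {ι κ : Type*} [Fintype κ] (T : ι → κ → ℝ) (v : κ → ℝ) : ι → ℝ :=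
  fun i => ∑ j, T i j * v j

/-- Kronecker product of two vectors. -/
def kron {ι κ : Type*} (p : ι → ℝ) (q : κ → ℝ) : ι × κ → ℝ :=
  fun x => p x.1 * q x.2

/-- `n`-fold Kronecker power of a vector. -/
def kpow {ι : Type*} (p : ι → ℝ) (n : ℕ) : (Fin n → ι) → ℝ :=
  fun f => ∏ j, p (f j)

/-- Kronecker product reindexed along `Fin (m * n)`. -/
def kronFin {m n : ℕ} (p : Fin m → ℝ) (q : Fin n → ℝ) : Fin (m * n) → ℝ :=
  fun i => kron p q (finProdFinEquiv.symm i)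

/-- The sum of the `k` largest entries of a nonnegative vector, expressed as the
largest sum over subsets of cardinality at most `k`. -/
def topSum {ι : Type*} [Fintype ι] (p : ι → ℝ) (k : ℕ) : ℝ :=
  ⨆ s ∈ {s : Finset ι | s.card ≤ k}, ∑ i ∈ s, p i

/-- Majorization for nonnegative vectors (possibly of different lengths):
equal total sums, and for each `k` the sum of the `k` largest entries of `p` is
at least that of `q`. -/
def Majorizes {ι κ : Type*} [Fintype ι] [Fintype κ] (p : ι → ℝ) (q : κ → ℝ) : Prop :=
  (∑ i, p i = ∑ j, q j) ∧ ∀ k : ℕ, topSum q k ≤ topSum p k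

/-- The size of the support, `‖p‖₀`. -/
def supp0 {ι : Type*} [Fintype ι] (p : ι → ℝ) : ℕ :=
  (Finset.univ.filter fun i => p i ≠ 0).card

/-- Entrywise nonnegativity. -/
def NonnegVec {n : ℕ} (p : Fin n → ℝ) : Prop := ∀ i, 0 ≤ p i

/-- The modified majorization preorder `≽₀,₁`: majorization plus equality of
support sizes. -/
def MajMod {ι κ : Type*} [Fintype ι] [Fintype κ] (p : ι → ℝ) (q : κ → ℝ) : Prop :=
  Majorizes p q ∧ supp0 p = supp0 q

/-- `f_α(p) = ∑_{i ∈ supp p} (p i)^α`. -/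
def fA {ι : Type*} [Fintype ι] (α : ℝ) (p : ι → ℝ) : ℝ :=
  ∑ i, if p i = 0 then 0 else p i ^ α

/-- Shannon entropy (the terms with `p i = 0` vanish). -/
def H1ent {ι : Type*} [Fintype ι] (p : ι → ℝ) : ℝ := -∑ i, p i * Real.log (p i)

/-- `H₀'(p) = ∑_{i ∈ supp p} log p_i`. -/
def H0' {ι : Type*} [Fintype ι] (p : ι → ℝ) : ℝ :=
  ∑ i, if p i = 0 then 0 else Real.log (p i)

/-- Rényi entropy of order `α` (with `α = 1` the Shannon entropy). -/
def Hent {ι : Type*} [Fintype ι] (α : ℝ) (p : ι → ℝ) : ℝ :=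
  if α = 1 then -∑ i, p i * Real.log (p i)
  else (1 / (1 - α)) * Real.log (∑ i, if p i = 0 then 0 else p i ^ α)

/-- Min-entropy `H_∞(p) = - log max_i p_i`. -/
def HentInf {ι : Type*} [Fintype ι] (p : ι → ℝ) : ℝ := -Real.log (⨆ i, p i)

/-- Kullback–Leibler divergence (the terms with `p i = 0` vanish). -/
def KL {n : ℕ} (p q : Fin n → ℝ) : ℝ :=
  ∑ i, p i * Real.log (p i / q i)

/-- Rényi divergence of order `α` for vectors with common support. -/
def Renyi {n : ℕ} (α : ℝ) (p q : Fin n → ℝ) : ℝ :=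
  if α = 1 then ∑ i, p i * Real.log (p i / q i)
  else (1 / (α - 1)) * Real.log (∑ i, if p i = 0 then 0 else p i ^ α * q i ^ (1 - α))

/-- Max-divergence `D_∞(p‖q) = max_{i ∈ supp q} log (p_i / q_i)`. -/
def RenyiInf {n : ℕ} (p q : Fin n → ℝ) : ℝ :=
  ⨆ i ∈ Finset.univ.filter (fun i => q i ≠ 0), Real.log (p i / q i)

/-- Rényi divergence with values in the extended reals `[0, ∞]`. -/
def RenyiE {n : ℕ} (α : ℝ) (p q : Fin n → ℝ) : EReal :=
  if α = 1 then
    (if ∀ i, p i ≠ 0 → q i ≠ 0 then ((∑ i, p i * Real.log (p i / q i) : ℝ) : EReal) else ⊤)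
  else if α < 1 then
    (if ∃ i, p i ≠ 0 ∧ q i ≠ 0 then
      (((1 / (α - 1)) *
        Real.log (∑ i, if p i = 0 ∨ q i = 0 then 0 else p i ^ α * q i ^ (1 - α)) : ℝ) : EReal)
    else (⊤ : EReal))
  else
    (if ∀ i, p i ≠ 0 → q i ≠ 0 then
      (((1 / (α - 1)) *
        Real.log (∑ i, if p i = 0 then 0 else p i ^ α * q i ^ (1 - α)) : ℝ) : EReal)
    else (⊤ : EReal))

/-- The common support of a tuple of vectors. -/
def suppIdx {d n : ℕ} (P : Fin d → Fin n → ℝ) : Finset (Fin n) :=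
  Finset.univ.filter fun i => ∃ k, P k i ≠ 0

/-- `f_α(P) = ∑_{i ∈ I} ∏_k (p_i^{(k)})^{α_k}` with `I` the common support. -/
def fMat {d n : ℕ} (α : Fin d → ℝ) (P : Fin d → Fin n → ℝ) : ℝ :=
  ∑ i ∈ suppIdx P, ∏ k, P k i ^ α k

/-- The matrix `α`-divergence `D_α`. -/
def Dmat {d n : ℕ} (α : Fin d → ℝ) (P : Fin d → Fin n → ℝ) : ℝ :=
  (1 / ((⨆ k, α k) - 1)) * Real.log (∑ i ∈ suppIdx P, ∏ k, P k i ^ α k)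

/-- The tropical matrix divergence `D^𝕋_β`. -/
def DmatT {d n : ℕ} (β : Fin d → ℝ) (P : Fin d → Fin n → ℝ) : ℝ :=
  (1 / (⨆ k, β k)) * Real.log (⨆ i ∈ suppIdx P, ∏ k, P k i ^ β k)

/-- Membership in `A₊`: entries summing to `1`, all nonnegative. -/
def memAplus {d : ℕ} (α : Fin d → ℝ) : Prop := (∑ k, α k = 1) ∧ ∀ k, 0 ≤ α k

/-- Membership in `A₋`: entries summing to `1`, one entry `≥ 1`, the others `≤ 0`. -/
def memAminus {d : ℕ} (α : Fin d → ℝ) : Prop :=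
  (∑ k, α k = 1) ∧ ∃ k, 1 ≤ α k ∧ ∀ l, l ≠ k → α l ≤ 0

/-- Membership in `B₋`: entries summing to `0`, one entry `≥ 0`, the others `≤ 0`. -/
def memBminus {d : ℕ} (β : Fin d → ℝ) : Prop :=
  (∑ k, β k = 0) ∧ ∃ k, 0 ≤ β k ∧ ∀ l, l ≠ k → β l ≤ 0

/-- `α` is none of the standard basis vectors `e₁, …, e_d`. -/
def notBasis {d : ℕ} (α : Fin d → ℝ) : Prop := ∀ k, α ≠ Pi.single k 1

/-- ℓ¹-distance of two vectors, padding with zeros to a common length. -/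
def l1PadDist {m n : ℕ} (p : Fin m → ℝ) (q : Fin n → ℝ) : ℝ :=
  ∑ i : Fin (max m n),
    |(if h : (i : ℕ) < m then p ⟨(i : ℕ), h⟩ else 0) -
      (if h : (i : ℕ) < n then q ⟨(i : ℕ), h⟩ else 0)|

/-- Index type of the direct sum `⨁_{s=0}^{n-1} p^{⊗(n-1-s)} ⊗ q^{⊗s}`. -/
abbrev TrickIdx (m m' n : ℕ) : Type :=
  Σ s : Fin n, (Fin (n - 1 - (s : ℕ)) → Fin m) × (Fin (s : ℕ) → Fin m')

/-- The standard catalyst `(1/n) ⨁_{s=0}^{n-1} p^{⊗(n-1-s)} ⊗ q^{⊗s}`. -/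
def trick {m m' : ℕ} (p : Fin m → ℝ) (q : Fin m' → ℝ) (n : ℕ) : TrickIdx m m' n → ℝ :=
  fun x => (1 / (n : ℝ)) * (kpow p (n - 1 - (x.1 : ℕ)) x.2.1 * kpow q (x.1 : ℕ) x.2.2)

/-- A valid tuple: nonnegative entries and common support across the tuple. -/
def TupOK {d n : ℕ} (P : Fin d → Fin n → ℝ) : Prop :=
  (∀ k i, 0 ≤ P k i) ∧ ∀ k l i, P k i ≠ 0 ↔ P l i ≠ 0

/-- Matrix majorization of tuples: a single stochastic matrix carrying each column
of `P` to the corresponding column of `Q`. -/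
def TupMaj {d m n : ℕ} (P : Fin d → Fin m → ℝ) (Q : Fin d → Fin n → ℝ) : Prop :=
  ∃ T : Fin n → Fin m → ℝ, IsStochastic T ∧ ∀ k, matVec T (P k) = Q k

/-!
By Blackwell's theorem, a stochastic matrix taking `(P₁, P₂)` to `(Q₁, Q₂)` exists as soon as
`∑ (Q₁ - t Q₂)₊ ≤ ∑ (P₁ - t P₂)₊` for all `t`: stochastic matrices form a product of simplices, so
Hahn–Banach reduces the question to maxima of linear forms, and such a maximum decomposes into
hinges `(x - t y)₊`.

For `n`-fold powers and `t = exp (n x)`, these sums are expectations over `n` independent copies of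
the log-likelihood ratio `L = log (p₁ / p₂)` under `p₂`. Their exponential rates are Legendre-type
expressions in the cumulant generating function `K(θ) = log ∑ p₁ ^ θ p₂ ^ (1 - θ)`, which is
`(θ - 1) D_θ(p₁‖p₂)`, by Chernoff's bound from above and Cramér's change of measure from below. The
slopes `x` above the mean `K'(1) = D₁(p₁‖p₂)` involve only `θ ≥ 1`, those below
`K'(0) = -D₁(p₂‖p₁)` only `θ ≤ 0`; for the slopes between, one passes to the overlap
`∑ min (p₁, t p₂)`, which involves `0 ≤ θ ≤ 1`. The order `∞` makes the left side vanish before the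
right one does, so only a compact interval of slopes remains, on which the comparison, being locally
uniform in `x`, holds for all large `n` at once.
-/

section Blackwell

variable {ι κ σ : Type*}

/-- The hockey-stick divergence `E_t(p‖q) = ∑ᵢ (pᵢ - t qᵢ)₊`. -/
def hockeyStick [Fintype ι] (p q : ι → ℝ) (t : ℝ) : ℝ := ∑ i, max 0 (p i - t * q i)

/-- The line of largest slope in a finite family either lies above all the others on the whole
half-plane `y ≥ 0`, or leaves the upper envelope at a last breakpoint `t`. -/
lemma exists_top_line_or_breakpoint (a b : σ → ℝ) {s : Finset σ} (hs : s.Nonempty) :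
    ∃ l ∈ s, (∀ j ∈ s, a j = a l ∧ b j ≤ b l) ∨
      ∃ k ∈ s, ∃ t, a k < a l ∧ a k * t + b k = a l * t + b l ∧
        ∀ j ∈ s, a j ≤ a l ∧ a j * t + b j ≤ a l * t + b l := by
  obtain ⟨l, hl, hmax⟩ := s.exists_max_image (fun j => toLex (a j, b j)) hs
  have hlex : ∀ j ∈ s, a j < a l ∨ a j = a l ∧ b j ≤ b l := fun j hj => by
    simpa [Prod.Lex.le_iff] using hmax j hj
  refine ⟨l, hl, ?_⟩
  rcases (s.filter fun j => a j < a l).eq_empty_or_nonempty with hempty | hne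
  · exact .inl fun j hj => (hlex j hj).resolve_left (Finset.filter_eq_empty_iff.1 hempty hj)
  obtain ⟨k, hk, hkmax⟩ :=
    (s.filter fun j => a j < a l).exists_max_image (fun j => (b j - b l) / (a l - a j)) hne
  obtain ⟨hks, hkl⟩ := Finset.mem_filter.1 hk
  refine .inr ⟨k, hks, (b k - b l) / (a l - a k), hkl, ?_, fun j hj => ?_⟩
  · field_simp [(sub_pos.2 hkl).ne']
    ring
  rcases hlex j hj with hlt | ⟨heq, hle⟩
  · have hcross := hkmax j (Finset.mem_filter.2 ⟨hj, hlt⟩)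
    rw [div_le_iff₀ (sub_pos.2 hlt)] at hcross
    exact ⟨hlt.le, by linarith⟩
  · exact ⟨heq.le, by rw [heq]; linarith⟩

lemma sup'_linear_eq_of_le {a b : σ → ℝ} {s : Finset σ} (hs : s.Nonempty) {k : σ} (hk : k ∈ s)
    {t x y : ℝ} (htop : ∀ j ∈ s, a j ≤ a k ∧ a j * t + b j ≤ a k * t + b k)
    (hy : 0 ≤ y) (hx : t * y ≤ x) :
    s.sup' hs (fun j => a j * x + b j * y) = a k * x + b k * y := by
  refine le_antisymm (Finset.sup'_le _ _ fun j hj => ?_)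
    (Finset.le_sup' (fun j => a j * x + b j * y) hk)
  obtain ⟨hslope, hvalue⟩ := htop j hj
  linarith [mul_le_mul_of_nonneg_right hslope (sub_nonneg.2 hx),
    mul_le_mul_of_nonneg_right hvalue hy]

lemma sup'_linear_eq_add_hinge {a b : σ → ℝ} {s : Finset σ} (hs : s.Nonempty) {k l : σ}
    (hk : k ∈ s) (hl : l ∈ s) {t : ℝ} (heq : a k * t + b k = a l * t + b l)
    (htop : ∀ j ∈ s, a j ≤ a l ∧ a j * t + b j ≤ a l * t + b l)
    (hs' : (s.filter fun j => a j ≤ a k).Nonempty) (x : ℝ) {y : ℝ} (hy : 0 ≤ y) :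
    s.sup' hs (fun j => a j * x + b j * y) =
      (s.filter fun j => a j ≤ a k).sup' hs' (fun j => a j * x + b j * y) +
        (a l - a k) * max 0 (x - t * y) := by
  replace hk : k ∈ s.filter fun j => a j ≤ a k := Finset.mem_filter.2 ⟨hk, le_rfl⟩
  rcases le_total (t * y) x with hx | hx
  · have htop' : ∀ j ∈ s.filter fun j => a j ≤ a k,
        a j ≤ a k ∧ a j * t + b j ≤ a k * t + b k := fun j hj =>
      ⟨(Finset.mem_filter.1 hj).2, heq ▸ (htop j (Finset.mem_filter.1 hj).1).2⟩
    rw [sup'_linear_eq_of_le hs hl htop hy hx, sup'_linear_eq_of_le _ hk htop' hy hx,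
      max_eq_right (sub_nonneg.2 hx)]
    linear_combination -y * heq
  · rw [max_eq_left (sub_nonpos.2 hx), mul_zero, add_zero]
    refine le_antisymm (Finset.sup'_le _ _ fun j hj => ?_)
      (Finset.sup'_mono _ (Finset.filter_subset _ _) _)
    by_cases hjk : a j ≤ a k
    · exact Finset.le_sup' (fun j => a j * x + b j * y) (Finset.mem_filter.2 ⟨hj, hjk⟩)
    · refine le_trans ?_ (Finset.le_sup' (fun j => a j * x + b j * y) hk)
      have hvalue := mul_le_mul_of_nonneg_right (heq ▸ (htop j hj).2) hy
      have hslope := mul_le_mul_of_nonneg_right (not_le.1 hjk).le (sub_nonneg.2 hx)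
      linarith

variable [Fintype ι] [Fintype κ] {P₁ P₂ : ι → ℝ} {Q₁ Q₂ : κ → ℝ}

/-- Peeling off the line of largest slope writes a maximum of linear forms as one linear form plus
nonnegative multiples of hinges `(x - t y)₊`. -/
lemma sum_sup'_linear_le (hP₂ : ∀ i, 0 ≤ P₂ i) (hQ₂ : ∀ j, 0 ≤ Q₂ j)
    (h₁ : ∑ j, Q₁ j = ∑ i, P₁ i) (h₂ : ∑ j, Q₂ j = ∑ i, P₂ i)
    (hE : ∀ t, hockeyStick Q₁ Q₂ t ≤ hockeyStick P₁ P₂ t)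
    (a b : σ → ℝ) (s : Finset σ) (hs : s.Nonempty) :
    ∑ j, s.sup' hs (fun k => a k * Q₁ j + b k * Q₂ j) ≤
      ∑ i, s.sup' hs (fun k => a k * P₁ i + b k * P₂ i) := by
  induction s using Finset.strongInduction with
  | H s ih =>
    obtain ⟨l, hl, htop | ⟨k, hks, t, hkl, heq, htop⟩⟩ := exists_top_line_or_breakpoint a b hs
    · have hlinear : ∀ x y : ℝ, 0 ≤ y →
          s.sup' hs (fun j => a j * x + b j * y) = a l * x + b l * y := fun x y hy =>
        le_antisymm
          (Finset.sup'_le _ _ fun j hj => by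
            rw [(htop j hj).1]
            exact add_le_add_right (mul_le_mul_of_nonneg_right (htop j hj).2 hy) _)
          (Finset.le_sup' (fun j => a j * x + b j * y) hl)
      simp only [hlinear _ _ (hP₂ _), hlinear _ _ (hQ₂ _), Finset.sum_add_distrib,
        ← Finset.mul_sum, h₁, h₂, le_refl]
    · have hne : (s.filter fun j => a j ≤ a k).Nonempty :=
        ⟨k, Finset.mem_filter.2 ⟨hks, le_rfl⟩⟩
      have hsub : (s.filter fun j => a j ≤ a k) ⊂ s :=
        Finset.filter_ssubset.2 ⟨l, hl, not_le.2 hkl⟩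
      simp only [sup'_linear_eq_add_hinge hs hks hl heq htop hne _ (hP₂ _),
        sup'_linear_eq_add_hinge hs hks hl heq htop hne _ (hQ₂ _), Finset.sum_add_distrib,
        ← Finset.mul_sum]
      exact add_le_add (ih _ hsub hne)
        (mul_le_mul_of_nonneg_left (hE t) (sub_nonneg.2 hkl.le))

lemma exists_apply_eq_sum_mul_add_mul (f : (κ → ℝ × ℝ) →ₗ[ℝ] ℝ) :
    ∃ a b : κ → ℝ, ∀ z, f z = ∑ j, (a j * (z j).1 + b j * (z j).2) := by
  classical
  refine ⟨fun j => f (LinearMap.single ℝ _ j (1, 0)), fun j => f (LinearMap.single ℝ _ j (0, 1)),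
    fun z => ?_⟩
  have hsingle : ∀ j, LinearMap.single ℝ (fun _ : κ => ℝ × ℝ) j (z j) =
      (z j).1 • LinearMap.single ℝ (fun _ : κ => ℝ × ℝ) j (1, 0) +
        (z j).2 • LinearMap.single ℝ (fun _ : κ => ℝ × ℝ) j (0, 1) := fun j => by
    rw [← map_smul, ← map_smul, ← map_add]
    simp
  calc f z = ∑ j, f (LinearMap.single ℝ _ j (z j)) := by
        rw [← map_sum]
        exact congrArg f (Finset.univ_sum_single z).symm
    _ = _ := Finset.sum_congr rfl fun j _ => by
        rw [hsingle, map_add, map_smul, map_smul, smul_eq_mul, smul_eq_mul, mul_comm _ (f _),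
          mul_comm _ (f _)]

/-- Stochastic matrices form a product of simplices, so a target pair outside their compact convex
image is separated from it by a linear functional, whose maximum over them is attained
columnwise. -/
lemma exists_isStochastic_of_forall_sum_le_sum_sup' [Nonempty κ]
    (h : ∀ a b : κ → ℝ, ∑ j, (a j * Q₁ j + b j * Q₂ j) ≤
      ∑ i, Finset.univ.sup' Finset.univ_nonempty (fun j => a j * P₁ i + b j * P₂ i)) :
    ∃ T : κ → ι → ℝ, IsStochastic T ∧ matVec T P₁ = Q₁ ∧ matVec T P₂ = Q₂ := by
  classical
  let S : Set (ι → κ → ℝ) := Set.univ.pi fun _ => stdSimplex ℝ κ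
  let Φ : (ι → κ → ℝ) →ₗ[ℝ] κ → ℝ × ℝ :=
    LinearMap.pi fun j => ∑ i, LinearMap.smulRight
      ((LinearMap.proj j : (κ → ℝ) →ₗ[ℝ] ℝ) ∘ₗ (LinearMap.proj i : (ι → κ → ℝ) →ₗ[ℝ] κ → ℝ))
      (P₁ i, P₂ i)
  have hΦ : ∀ T j, Φ T j = (∑ i, T i j * P₁ i, ∑ i, T i j * P₂ i) := fun T j => by
    ext <;> simp [Φ, Prod.fst_sum, Prod.snd_sum]
  have hclosed : IsClosed (Φ '' S) :=
    ((isCompact_univ_pi fun _ => isCompact_stdSimplex ℝ κ).image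
      Φ.continuous_of_finiteDimensional).isClosed
  have hconvex : Convex ℝ (Φ '' S) :=
    (convex_pi fun _ _ => convex_stdSimplex ℝ κ).linear_image Φ
  by_cases hmem : (fun j => (Q₁ j, Q₂ j)) ∈ Φ '' S
  · obtain ⟨T, hT, hTQ⟩ := hmem
    have hTQ' := fun j => (hΦ T j).symm.trans (congrFun hTQ j)
    exact ⟨fun j i => T i j, ⟨fun j i => (hT i trivial).1 j, fun i => (hT i trivial).2⟩,
      funext fun j => congrArg Prod.fst (hTQ' j), funext fun j => congrArg Prod.snd (hTQ' j)⟩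
  obtain ⟨f, u, hfu, huf⟩ := geometric_hahn_banach_closed_point hconvex hclosed hmem
  obtain ⟨a, b, (hf : ∀ z, f z = _)⟩ := exists_apply_eq_sum_mul_add_mul f.toLinearMap
  choose g hg using fun i => Finset.exists_mem_eq_sup' Finset.univ_nonempty
    (fun j => a j * P₁ i + b j * P₂ i)
  let T : ι → κ → ℝ := fun i => Pi.single (g i) 1
  have hTS : T ∈ S := fun i _ => single_mem_stdSimplex ℝ (g i)
  have hfT : f (Φ T) = ∑ i, (a (g i) * P₁ i + b (g i) * P₂ i) := by
    simp only [hf, hΦ, Finset.mul_sum, ← Finset.sum_add_distrib]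
    rw [Finset.sum_comm]
    simp [T, Pi.single_apply, Finset.sum_add_distrib]
  refine absurd (h a b) (not_le.2 ?_)
  calc ∑ i, Finset.univ.sup' Finset.univ_nonempty (fun j => a j * P₁ i + b j * P₂ i)
      = f (Φ T) := by rw [hfT]; exact Finset.sum_congr rfl fun i _ => (hg i).2
    _ < f fun j => (Q₁ j, Q₂ j) := (hfu _ (Set.mem_image_of_mem Φ hTS)).trans huf
    _ = ∑ j, (a j * Q₁ j + b j * Q₂ j) := hf _

theorem exists_isStochastic_of_hockeyStick_le [Nonempty κ]
    (hP₂ : ∀ i, 0 ≤ P₂ i) (hQ₂ : ∀ j, 0 ≤ Q₂ j)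
    (h₁ : ∑ j, Q₁ j = ∑ i, P₁ i) (h₂ : ∑ j, Q₂ j = ∑ i, P₂ i)
    (hE : ∀ t, hockeyStick Q₁ Q₂ t ≤ hockeyStick P₁ P₂ t) :
    ∃ T : κ → ι → ℝ, IsStochastic T ∧ matVec T P₁ = Q₁ ∧ matVec T P₂ = Q₂ :=
  exists_isStochastic_of_forall_sum_le_sum_sup' fun a b =>
    (Finset.sum_le_sum fun j _ =>
      Finset.le_sup' (fun k => a k * Q₁ j + b k * Q₂ j) (Finset.mem_univ j)).trans
    (sum_sup'_linear_le hP₂ hQ₂ h₁ h₂ hE a b Finset.univ Finset.univ_nonempty)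

end Blackwell

section CumulantGeneratingFunction

open Filter Topology

variable {ι : Type*} [Fintype ι]

/-- The moment generating function of the finite random variable `L` with weights `w`. -/
def finMgf (w L : ι → ℝ) (θ : ℝ) : ℝ := ∑ i, w i * Real.exp (θ * L i)

/-- The cumulant generating function of the finite random variable `L` with weights `w`. -/
def finCgf (w L : ι → ℝ) (θ : ℝ) : ℝ := Real.log (finMgf w L θ)

/-- The exponential tilt (Esscher transform) of the weights `w` along `L`. -/
def tilt (w L : ι → ℝ) (θ : ℝ) : ι → ℝ := fun i => w i * Real.exp (θ * L i) / finMgf w L θ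

/-- The mean of `L` under the tilted weights, i.e. the derivative of `finCgf w L` at `θ`. -/
def tiltedMean (w L : ι → ℝ) (θ : ℝ) : ℝ := ∑ i, tilt w L θ i * L i

variable {w : ι → ℝ}

lemma IsProbVec.exists_pos (hw : IsProbVec w) : ∃ i, 0 < w i := by
  obtain ⟨i, -, hi⟩ := Finset.exists_ne_zero_of_sum_ne_zero (hw.2.trans_ne one_ne_zero)
  exact ⟨i, (hw.1 i).lt_of_ne' hi⟩

lemma finMgf_pos (hw : IsProbVec w) (L : ι → ℝ) (θ : ℝ) : 0 < finMgf w L θ := by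
  obtain ⟨i, hi⟩ := hw.exists_pos
  exact Finset.sum_pos' (fun j _ => mul_nonneg (hw.1 j) (Real.exp_pos _).le)
    ⟨i, Finset.mem_univ i, mul_pos hi (Real.exp_pos _)⟩

lemma exp_finCgf (hw : IsProbVec w) (L : ι → ℝ) (θ : ℝ) :
    Real.exp (finCgf w L θ) = finMgf w L θ :=
  Real.exp_log (finMgf_pos hw L θ)

lemma finCgf_zero (hw : IsProbVec w) (L : ι → ℝ) : finCgf w L 0 = 0 := by
  simp [finCgf, finMgf, hw.2]

lemma isProbVec_tilt (hw : IsProbVec w) (L : ι → ℝ) (θ : ℝ) : IsProbVec (tilt w L θ) :=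
  ⟨fun i => div_nonneg (mul_nonneg (hw.1 i) (Real.exp_pos _).le) (finMgf_pos hw L θ).le, by
    rw [← div_self (finMgf_pos hw L θ).ne', finMgf, Finset.sum_div]
    rfl⟩

lemma tilt_zero (hw : IsProbVec w) (L : ι → ℝ) : tilt w L 0 = w := by
  funext i
  simp [tilt, finMgf, hw.2]

lemma finCgf_tilt (hw : IsProbVec w) (L : ι → ℝ) (θ η : ℝ) :
    finCgf (tilt w L θ) L η = finCgf w L (θ + η) - finCgf w L θ := by
  have hmgf : finMgf (tilt w L θ) L η = finMgf w L (θ + η) / finMgf w L θ := by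
    simp only [finMgf, tilt, Finset.sum_div, add_mul, Real.exp_add]
    exact Finset.sum_congr rfl fun i _ => by ring
  rw [finCgf, hmgf, Real.log_div (finMgf_pos hw L _).ne' (finMgf_pos hw L _).ne', finCgf, finCgf]

lemma mul_sum_le_finCgf (hw : IsProbVec w) (L : ι → ℝ) (θ : ℝ) :
    θ * ∑ i, w i * L i ≤ finCgf w L θ := by
  rw [finCgf, Real.le_log_iff_exp_le (finMgf_pos hw L θ)]
  have hjensen := convexOn_exp.map_sum_le (t := Finset.univ) (w := w) (p := fun i => θ * L i)
    (fun i _ => hw.1 i) hw.2 fun i _ => Set.mem_univ _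
  simp only [smul_eq_mul, mul_left_comm _ θ, ← Finset.mul_sum] at hjensen
  exact hjensen

lemma finCgf_add_mul_le (hw : IsProbVec w) (L : ι → ℝ) (θ θ' : ℝ) :
    finCgf w L θ + (θ' - θ) * tiltedMean w L θ ≤ finCgf w L θ' := by
  have htangent := mul_sum_le_finCgf (isProbVec_tilt hw L θ) L (θ' - θ)
  rw [finCgf_tilt hw, add_sub_cancel] at htangent
  exact le_sub_iff_add_le'.1 htangent

lemma continuous_finMgf (w L : ι → ℝ) : Continuous (finMgf w L) := by
  unfold finMgf
  fun_prop

lemma continuous_finCgf (hw : IsProbVec w) (L : ι → ℝ) : Continuous (finCgf w L) :=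
  (continuous_finMgf w L).log fun θ => (finMgf_pos hw L θ).ne'

lemma continuous_tiltedMean (hw : IsProbVec w) (L : ι → ℝ) : Continuous (tiltedMean w L) :=
  continuous_finsetSum _ fun i _ =>
    (Continuous.div (by fun_prop) (continuous_finMgf w L) fun θ =>
      (finMgf_pos hw L θ).ne').mul continuous_const

lemma exists_lt_tiltedMean (hw : IsProbVec w) {L : ι → ℝ} {i : ι} (hi : 0 < w i) {c : ℝ}
    (hc : c < L i) : ∃ θ > 0, c < tiltedMean w L θ := by
  have hlower : ∀ θ, Real.log (w i) + θ * L i ≤ finCgf w L θ := fun θ => by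
    rw [← Real.log_exp (θ * L i), ← Real.log_mul hi.ne' (Real.exp_pos _).ne']
    exact Real.log_le_log (mul_pos hi (Real.exp_pos _))
      (Finset.single_le_sum (f := fun i => w i * Real.exp (θ * L i))
        (fun i _ => mul_nonneg (hw.1 i) (Real.exp_pos _).le) (Finset.mem_univ i))
  obtain ⟨θ, hθ, (hlarge : _ < θ * _)⟩ := ((eventually_gt_atTop (0 : ℝ)).and
    ((tendsto_id.atTop_mul_const (sub_pos.2 hc)).eventually_gt_atTop (-Real.log (w i)))).exists
  have htangent := finCgf_add_mul_le hw L θ 0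
  rw [finCgf_zero hw] at htangent
  exact ⟨θ, hθ, lt_of_mul_lt_mul_left (by linarith [hlower θ]) hθ.le⟩

lemma eventually_finCgf_lt_nhdsGT (hw : IsProbVec w) {L : ι → ℝ} {θ b : ℝ}
    (hb : tiltedMean w L θ < b) :
    ∀ᶠ η in 𝓝[>] θ, finCgf w L η < finCgf w L θ + (η - θ) * b := by
  filter_upwards [self_mem_nhdsWithin, ((continuous_tiltedMean hw L).tendsto θ).mono_left
    nhdsWithin_le_nhds |>.eventually_lt_const hb] with η hη hmean
  linarith [finCgf_add_mul_le hw L η θ, mul_lt_mul_of_pos_left hmean (sub_pos.2 hη)]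

lemma eventually_finCgf_lt_nhdsLT (hw : IsProbVec w) {L : ι → ℝ} {θ a : ℝ}
    (ha : a < tiltedMean w L θ) :
    ∀ᶠ η in 𝓝[<] θ, finCgf w L η < finCgf w L θ + (η - θ) * a := by
  filter_upwards [self_mem_nhdsWithin, ((continuous_tiltedMean hw L).tendsto θ).mono_left
    nhdsWithin_le_nhds |>.eventually_const_lt ha] with η hη hmean
  linarith [finCgf_add_mul_le hw L η θ, mul_lt_mul_of_neg_left hmean (sub_neg.2 hη)]

lemma tiltedMean_mono (hw : IsProbVec w) (L : ι → ℝ) : Monotone (tiltedMean w L) := by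
  intro θ θ' hle
  rcases hle.eq_or_lt with rfl | hlt
  · exact le_rfl
  · exact le_of_mul_le_mul_left
      (by linarith [finCgf_add_mul_le hw L θ θ', finCgf_add_mul_le hw L θ' θ]) (sub_pos.2 hlt)

lemma exists_greatest_tiltedMean_eq (hw : IsProbVec w) {L : ι → ℝ} {θ₀ c : ℝ} {i : ι}
    (hi : 0 < w i) (hc : c < L i) (h₀ : tiltedMean w L θ₀ ≤ c) :
    ∃ θ ≥ θ₀, tiltedMean w L θ = c ∧ ∀ η > θ, c < tiltedMean w L η := by
  obtain ⟨b, -, hb⟩ := exists_lt_tiltedMean hw hi hc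
  have hbdd : BddAbove {η | tiltedMean w L η ≤ c} :=
    ⟨b, fun η hη => (tiltedMean_mono hw L).reflect_lt (lt_of_le_of_lt hη hb) |>.le⟩
  have hmem : tiltedMean w L (sSup {η | tiltedMean w L η ≤ c}) ≤ c :=
    (isClosed_le (continuous_tiltedMean hw L) continuous_const).csSup_mem ⟨θ₀, h₀⟩ hbdd
  have hgt : ∀ η > sSup {η | tiltedMean w L η ≤ c}, c < tiltedMean w L η := fun η hη =>
    not_le.1 fun hle => (le_csSup hbdd hle).not_gt hη
  refine ⟨_, le_csSup hbdd h₀, hmem.antisymm ?_, hgt⟩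
  exact ge_of_tendsto (((continuous_tiltedMean hw L).tendsto _).mono_left nhdsWithin_le_nhds)
    ((eventually_mem_nhdsWithin (s := Set.Ioi _)).mono fun η hη => (hgt η hη).le)

end CumulantGeneratingFunction

section IndependentCopies

open Filter Topology

variable {ι : Type*}

/-- The sum of `L` over the `n` independent coordinates of `f`. -/
def iidSum (L : ι → ℝ) (n : ℕ) (f : Fin n → ι) : ℝ := ∑ j, L (f j)

lemma kpow_nonneg {w : ι → ℝ} (hw : ∀ i, 0 ≤ w i) (n : ℕ) (f : Fin n → ι) : 0 ≤ kpow w n f :=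
  Finset.prod_nonneg fun j _ => hw (f j)

lemma kpow_mul_exp (w L : ι → ℝ) (n : ℕ) (f : Fin n → ι) :
    kpow (fun i => w i * Real.exp (L i)) n f = kpow w n f * Real.exp (iidSum L n f) := by
  simp only [kpow, iidSum, Finset.prod_mul_distrib, Real.exp_sum]

variable [Fintype ι]

lemma IsProbVec.kpow {w : ι → ℝ} (hw : IsProbVec w) (n : ℕ) : IsProbVec (kpow w n) :=
  ⟨kpow_nonneg hw.1 n, by simp only [_root_.kpow, ← Fintype.sum_pow, hw.2, one_pow]⟩

variable {w : ι → ℝ}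

lemma kpow_tilt (hw : IsProbVec w) (L : ι → ℝ) (θ : ℝ) (n : ℕ) (f : Fin n → ι) :
    kpow (tilt w L θ) n f =
      kpow w n f * Real.exp (θ * iidSum L n f - n * finCgf w L θ) := by
  have htilt : tilt w L θ = fun i => w i * Real.exp (θ * L i - finCgf w L θ) := funext fun i => by
    rw [tilt, Real.exp_sub, exp_finCgf hw, mul_div_assoc]
  rw [htilt, kpow_mul_exp]
  simp [iidSum, Finset.mul_sum]

lemma sum_kpow_mul_exp (hw : IsProbVec w) (L : ι → ℝ) (θ : ℝ) (n : ℕ) :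
    ∑ f, kpow w n f * Real.exp (θ * iidSum L n f) = Real.exp (n * finCgf w L θ) := by
  have htilt : ∀ f, kpow w n f * Real.exp (θ * iidSum L n f) =
      kpow (tilt w L θ) n f * Real.exp (n * finCgf w L θ) := fun f => by
    rw [kpow_tilt hw, mul_assoc, ← Real.exp_add, sub_add_cancel]
  simp only [htilt, ← Finset.sum_mul, ((isProbVec_tilt hw L θ).kpow n).2, one_mul]

lemma sum_kpow_mul_le (hw : IsProbVec w) (L : ι → ℝ) (θ d : ℝ) {n : ℕ} {φ : ℝ → ℝ}
    (hφ : ∀ s, φ s ≤ Real.exp (n * d + θ * s)) :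
    ∑ f, kpow w n f * φ (iidSum L n f) ≤ Real.exp (n * (finCgf w L θ + d)) := by
  calc ∑ f, kpow w n f * φ (iidSum L n f)
      ≤ ∑ f, kpow w n f * Real.exp (n * d + θ * iidSum L n f) :=
        Finset.sum_le_sum fun f _ => mul_le_mul_of_nonneg_left (hφ _) (kpow_nonneg hw.1 n f)
    _ = Real.exp (n * (finCgf w L θ + d)) := by
        simp only [Real.exp_add (n * d), mul_left_comm _ (Real.exp (n * d)), ← Finset.mul_sum]
        rw [sum_kpow_mul_exp hw, ← Real.exp_add]
        ring_nf

lemma tendsto_exp_nat_mul_atTop_zero {c : ℝ} (hc : c < 0) :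
    Tendsto (fun n : ℕ => Real.exp (n * c)) atTop (𝓝 0) :=
  Real.tendsto_exp_atBot.comp (tendsto_natCast_atTop_atTop.atTop_mul_const_of_neg hc)

/-- The weak law of large numbers for `kpow w n`, through Chernoff bounds on both tails. -/
lemma eventually_half_le_sum_kpow (hw : IsProbVec w) {L : ι → ℝ} {a b : ℝ}
    (ha : a < tiltedMean w L 0) (hb : tiltedMean w L 0 < b) :
    ∀ᶠ n : ℕ in atTop, 1 / 2 ≤
      ∑ f, kpow w n f * if n * a < iidSum L n f ∧ iidSum L n f < n * b then 1 else 0 := by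
  obtain ⟨η, hη, hη₀ : 0 < η⟩ :=
    ((eventually_finCgf_lt_nhdsGT hw hb).and self_mem_nhdsWithin).exists
  obtain ⟨ζ, hζ, hζ₀ : ζ < 0⟩ :=
    ((eventually_finCgf_lt_nhdsLT hw ha).and self_mem_nhdsWithin).exists
  rw [finCgf_zero hw, zero_add, sub_zero] at hη hζ
  have hquarter : (0 : ℝ) < 1 / 4 := by norm_num
  filter_upwards [
    (tendsto_exp_nat_mul_atTop_zero (sub_neg.2 hη)).eventually_le_const hquarter,
    (tendsto_exp_nat_mul_atTop_zero (sub_neg.2 hζ)).eventually_le_const hquarter]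
    with n hupper hlower
  have hu := sum_kpow_mul_le hw L η (-(η * b)) (n := n)
    (φ := fun s => if n * b ≤ s then 1 else 0) fun s => by
      split_ifs with hs
      · exact Real.one_le_exp (by linarith [mul_le_mul_of_nonneg_left hs hη₀.le])
      · exact (Real.exp_pos _).le
  have hl := sum_kpow_mul_le hw L ζ (-(ζ * a)) (n := n)
    (φ := fun s => if s ≤ n * a then 1 else 0) fun s => by
      split_ifs with hs
      · exact Real.one_le_exp (by linarith [mul_le_mul_of_nonpos_left hs hζ₀.le])
      · exact (Real.exp_pos _).le
  have hcover : 1 ≤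
      ∑ f, kpow w n f * (if n * a < iidSum L n f ∧ iidSum L n f < n * b then 1 else 0) +
        ∑ f, kpow w n f * (if n * b ≤ iidSum L n f then 1 else 0) +
        ∑ f, kpow w n f * (if iidSum L n f ≤ n * a then 1 else 0) := by
    rw [← Finset.sum_add_distrib, ← Finset.sum_add_distrib]
    refine (hw.kpow n).2.symm.le.trans (Finset.sum_le_sum fun f _ => ?_)
    simp only [← mul_add]
    refine le_mul_of_one_le_right (kpow_nonneg hw.1 n f) ?_
    grind
  rw [← sub_eq_add_neg] at hu hl
  linarith

/-- Change of measure: under the tilted law, `iidSum L n` concentrates near `n * tiltedMean w L θ`,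
so only the values of the integrand `φ` there matter. -/
lemma eventually_exp_le_sum_kpow_mul (hw : IsProbVec w) {L : ι → ℝ} {θ a b d e : ℝ}
    (ha : a < tiltedMean w L θ) (hb : tiltedMean w L θ < b) (he : e < finCgf w L θ + d)
    {F : Filter (ℕ × ℝ)} (hF : Tendsto Prod.fst F atTop) {φ : ℕ × ℝ → ℝ → ℝ}
    (hφ₀ : ∀ z s, 0 ≤ φ z s)
    (hφ : ∀ᶠ z in F, ∀ s, z.1 * a < s → s < z.1 * b → Real.exp (z.1 * d + θ * s) ≤ φ z s) :
    ∀ᶠ z in F, Real.exp (z.1 * e) ≤ ∑ f, kpow w z.1 f * φ z (iidSum L z.1 f) := by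
  have hwt := isProbVec_tilt hw L θ
  have hmean : tiltedMean (tilt w L θ) L 0 = tiltedMean w L θ := by
    rw [tiltedMean, tilt_zero hwt, tiltedMean]
  filter_upwards [hφ, hF.eventually (eventually_half_le_sum_kpow hwt (hmean ▸ ha) (hmean ▸ hb)),
    hF.eventually ((tendsto_exp_nat_mul_atTop_zero (sub_neg.2 he)).eventually_le_const
      (by norm_num : (0 : ℝ) < 1 / 2))] with z hφz hconc hsmall
  have hpoint : ∀ f, kpow (tilt w L θ) z.1 f *
      (if z.1 * a < iidSum L z.1 f ∧ iidSum L z.1 f < z.1 * b then 1 else 0) *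
        Real.exp (z.1 * (finCgf w L θ + d)) ≤ kpow w z.1 f * φ z (iidSum L z.1 f) := fun f => by
    split_ifs with hs
    · rw [kpow_tilt hw, mul_one, mul_assoc, ← Real.exp_add]
      refine mul_le_mul_of_nonneg_left ?_ (kpow_nonneg hw.1 _ f)
      refine le_trans (Real.exp_le_exp.2 (le_of_eq ?_)) (hφz _ hs.1 hs.2)
      ring
    · rw [mul_zero, zero_mul]
      exact mul_nonneg (kpow_nonneg hw.1 _ f) (hφ₀ _ _)
  calc Real.exp (z.1 * e)
      = Real.exp (z.1 * (e - (finCgf w L θ + d))) * Real.exp (z.1 * (finCgf w L θ + d)) := by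
        rw [← Real.exp_add]; ring_nf
    _ ≤ _ := mul_le_mul_of_nonneg_right (hsmall.trans hconc) (Real.exp_pos _).le
    _ ≤ _ := by
        rw [Finset.sum_mul]
        exact Finset.sum_le_sum fun f _ => hpoint f

end IndependentCopies

section Dichotomies

open Filter Topology

variable {ι : Type*}

/-- The log-likelihood ratio of `p` against `q`. -/
def llr (p q : ι → ℝ) (i : ι) : ℝ := Real.log (p i / q i)

lemma llr_swap (p q : ι → ℝ) (i : ι) : llr q p i = -llr p q i := by
  rw [llr, llr, ← Real.log_inv, inv_div]

variable [Fintype ι]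

/-- The overlap `∑ i, min (p i) (t * q i)`, complementary to `hockeyStick p q t`. For powers of
`p, q` and `t = exp (n * x)` with `x` between the means of `llr p q` under `q` and under `p`, it is
the exponentially small one of the two. -/
def overlap (p q : ι → ℝ) (t : ℝ) : ℝ := ∑ i, min (p i) (t * q i)

lemma hockeyStick_add_overlap (p q : ι → ℝ) (t : ℝ) :
    hockeyStick p q t + overlap p q t = ∑ i, p i := by
  rw [hockeyStick, overlap, ← Finset.sum_add_distrib]
  refine Finset.sum_congr rfl fun i _ => ?_
  rw [← sub_self (t * q i), max_sub_sub_right, max_comm, sub_add_eq_add_sub, max_add_min,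
    add_sub_cancel_right]

lemma overlap_swap (p q : ι → ℝ) {t : ℝ} (ht : 0 < t) :
    overlap p q t = t * overlap q p t⁻¹ := by
  rw [overlap, overlap, Finset.mul_sum]
  refine Finset.sum_congr rfl fun i _ => ?_
  rw [mul_min_of_nonneg _ _ ht.le, mul_inv_cancel_left₀ ht.ne', min_comm]

/-- A dichotomy: a pair of probability vectors with coinciding supports. -/
structure IsDichotomy (p q : ι → ℝ) : Prop where
  left : IsProbVec p
  right : IsProbVec q
  ne_zero_iff : ∀ i, p i ≠ 0 ↔ q i ≠ 0

variable {p q : ι → ℝ}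

namespace IsDichotomy

lemma symm (h : IsDichotomy p q) : IsDichotomy q p :=
  ⟨h.right, h.left, fun i => (h.ne_zero_iff i).symm⟩

lemma mul_exp_llr (h : IsDichotomy p q) (i : ι) : q i * Real.exp (llr p q i) = p i := by
  by_cases hq : q i = 0
  · rw [hq, zero_mul, not_not.1 (mt (h.ne_zero_iff i).1 (not_not.2 hq))]
  · have hp : p i ≠ 0 := (h.ne_zero_iff i).2 hq
    rw [llr, Real.exp_log (div_pos ((h.left.1 i).lt_of_ne' hp) ((h.right.1 i).lt_of_ne' hq)),
      mul_div_cancel₀ _ hq]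

lemma kpow_eq (h : IsDichotomy p q) (n : ℕ) (f : Fin n → ι) :
    kpow p n f = kpow q n f * Real.exp (iidSum (llr p q) n f) := by
  rw [← kpow_mul_exp, funext h.mul_exp_llr]

lemma hockeyStick_kpow_exp (h : IsDichotomy p q) (n : ℕ) (x : ℝ) :
    hockeyStick (kpow p n) (kpow q n) (Real.exp (n * x)) =
      ∑ f, kpow q n f * max 0 (Real.exp (iidSum (llr p q) n f) - Real.exp (n * x)) := by
  refine Finset.sum_congr rfl fun f _ => ?_
  rw [h.kpow_eq, mul_comm (Real.exp _) (kpow q n f), ← mul_sub,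
    mul_max_of_nonneg _ _ (kpow_nonneg h.right.1 n f), mul_zero]

lemma overlap_kpow_exp (h : IsDichotomy p q) (n : ℕ) (x : ℝ) :
    overlap (kpow p n) (kpow q n) (Real.exp (n * x)) =
      ∑ f, kpow q n f * min (Real.exp (iidSum (llr p q) n f)) (Real.exp (n * x)) := by
  refine Finset.sum_congr rfl fun f _ => ?_
  rw [h.kpow_eq, mul_comm (Real.exp _) (kpow q n f),
    mul_min_of_nonneg _ _ (kpow_nonneg h.right.1 n f)]

lemma finMgf_swap (h : IsDichotomy p q) (θ : ℝ) :
    finMgf p (llr q p) θ = finMgf q (llr p q) (1 - θ) := by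
  refine Finset.sum_congr rfl fun i _ => ?_
  rw [llr_swap, ← h.mul_exp_llr, mul_assoc, ← Real.exp_add]
  ring_nf

lemma finCgf_swap (h : IsDichotomy p q) (θ : ℝ) :
    finCgf p (llr q p) θ = finCgf q (llr p q) (1 - θ) := by
  rw [finCgf, finCgf, h.finMgf_swap]

lemma finCgf_one (h : IsDichotomy p q) : finCgf q (llr p q) 1 = 0 := by
  rw [h.symm.finCgf_swap, sub_self, finCgf_zero h.left]

lemma tiltedMean_swap (h : IsDichotomy p q) (θ : ℝ) :
    tiltedMean p (llr q p) θ = -tiltedMean q (llr p q) (1 - θ) := by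
  rw [tiltedMean, tiltedMean, ← Finset.sum_neg_distrib]
  refine Finset.sum_congr rfl fun i _ => ?_
  rw [tilt, tilt, h.finMgf_swap, llr_swap, ← h.mul_exp_llr, mul_assoc, ← Real.exp_add, mul_neg]
  ring_nf

lemma hockeyStick_kpow_le (h : IsDichotomy p q) {θ : ℝ} (hθ : 1 ≤ θ) (n : ℕ) (x : ℝ) :
    hockeyStick (kpow p n) (kpow q n) (Real.exp (n * x)) ≤
      Real.exp (n * (finCgf q (llr p q) θ + (1 - θ) * x)) := by
  rw [h.hockeyStick_kpow_exp]
  refine sum_kpow_mul_le h.right _ _ _ (φ := fun s => max 0 (Real.exp s - Real.exp (n * x)))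
    fun s => max_le (Real.exp_pos _).le ?_
  rcases le_total s (n * x) with hs | hs
  · exact (sub_nonpos.2 (Real.exp_le_exp.2 hs)).trans (Real.exp_pos _).le
  · refine (sub_le_self _ (Real.exp_pos _).le).trans (Real.exp_le_exp.2 ?_)
    linarith [mul_le_mul_of_nonneg_left hs (sub_nonneg.2 hθ)]

lemma overlap_kpow_le (h : IsDichotomy p q) {θ : ℝ} (hθ₀ : 0 ≤ θ) (hθ₁ : θ ≤ 1) (n : ℕ) (x : ℝ) :
    overlap (kpow p n) (kpow q n) (Real.exp (n * x)) ≤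
      Real.exp (n * (finCgf q (llr p q) θ + (1 - θ) * x)) := by
  rw [h.overlap_kpow_exp]
  refine sum_kpow_mul_le h.right _ _ _ (φ := fun s => min (Real.exp s) (Real.exp (n * x)))
    fun s => ?_
  rw [← Real.exp_monotone.map_min, Real.exp_le_exp]
  linarith [mul_le_mul_of_nonneg_left (min_le_left s (n * x)) hθ₀,
    mul_le_mul_of_nonneg_left (min_le_right s (n * x)) (sub_nonneg.2 hθ₁)]

lemma eventually_exp_le_overlap_kpow (h : IsDichotomy p q) {θ c e : ℝ} (hθ₀ : 0 ≤ θ) (hθ₁ : θ ≤ 1)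
    (he : e < finCgf q (llr p q) θ +
      min ((1 - θ) * tiltedMean q (llr p q) θ) (c - θ * tiltedMean q (llr p q) θ)) :
    ∀ᶠ z : ℕ × ℝ in atTop ×ˢ 𝓝 c,
      Real.exp (z.1 * e) ≤ overlap (kpow p z.1) (kpow q z.1) (Real.exp (z.1 * z.2)) := by
  set μ := tiltedMean q (llr p q) θ
  have hcont : Tendsto (fun ε => finCgf q (llr p q) θ +
      min ((1 - θ) * (μ - ε)) (c - ε - θ * (μ + ε))) (𝓝[>] 0) (𝓝 (finCgf q (llr p q) θ +
      min ((1 - θ) * (μ - 0)) (c - 0 - θ * (μ + 0)))) :=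
    tendsto_nhdsWithin_of_tendsto_nhds (Continuous.tendsto (by fun_prop) 0)
  obtain ⟨ε, hε, hε₀ : 0 < ε⟩ := ((hcont.eventually_const_lt (by simpa using he)).and
    self_mem_nhdsWithin).exists
  simp only [h.overlap_kpow_exp]
  refine eventually_exp_le_sum_kpow_mul h.right (sub_lt_self μ hε₀) (lt_add_of_pos_right μ hε₀) hε
    tendsto_fst (φ := fun z s => min (Real.exp s) (Real.exp (z.1 * z.2)))
    (fun z s => le_min (Real.exp_pos _).le (Real.exp_pos _).le) ?_
  filter_upwards [tendsto_snd.eventually (lt_mem_nhds (sub_lt_self c hε₀))] with z hz s hlo hhi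
  have hn : (0 : ℝ) ≤ z.1 := z.1.cast_nonneg
  have hd₁ := mul_le_mul_of_nonneg_left
    (min_le_left ((1 - θ) * (μ - ε)) (c - ε - θ * (μ + ε))) hn
  have hd₂ := mul_le_mul_of_nonneg_left
    ((min_le_right ((1 - θ) * (μ - ε)) (c - ε - θ * (μ + ε))).trans (sub_le_sub_right hz.le _)) hn
  refine le_min (Real.exp_le_exp.2 ?_) (Real.exp_le_exp.2 ?_)
  · linarith [mul_le_mul_of_nonneg_left hlo.le (sub_nonneg.2 hθ₁)]
  · linarith [mul_le_mul_of_nonneg_left hhi.le hθ₀]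

lemma eventually_exp_le_hockeyStick_kpow (h : IsDichotomy p q) {θ c e : ℝ} (hθ : 1 ≤ θ)
    (hc : c < tiltedMean q (llr p q) θ)
    (he : e < finCgf q (llr p q) θ + (1 - θ) * tiltedMean q (llr p q) θ) :
    ∀ᶠ z : ℕ × ℝ in atTop ×ˢ 𝓝 c,
      Real.exp (z.1 * e) ≤ hockeyStick (kpow p z.1) (kpow q z.1) (Real.exp (z.1 * z.2)) := by
  set μ := tiltedMean q (llr p q) θ
  have hcont : Tendsto (fun ε => finCgf q (llr p q) θ + ((1 - θ) * (μ + ε) - ε))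
      (𝓝[>] 0) (𝓝 (finCgf q (llr p q) θ + ((1 - θ) * (μ + 0) - 0))) :=
    tendsto_nhdsWithin_of_tendsto_nhds (Continuous.tendsto (by fun_prop) 0)
  have hgap : ∀ᶠ ε in 𝓝[>] (0 : ℝ), ε < (μ - c) / 3 :=
    nhdsWithin_le_nhds (gt_mem_nhds (by linarith))
  obtain ⟨ε, ⟨hε, hεc⟩, hε₀ : 0 < ε⟩ := (((hcont.eventually_const_lt (by simpa using he)).and
    hgap).and self_mem_nhdsWithin).exists
  simp only [h.hockeyStick_kpow_exp]
  refine eventually_exp_le_sum_kpow_mul h.right (sub_lt_self μ hε₀) (lt_add_of_pos_right μ hε₀) hε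
    tendsto_fst (φ := fun z s => max 0 (Real.exp s - Real.exp (z.1 * z.2)))
    (fun z s => le_max_left _ _) ?_
  filter_upwards [tendsto_snd.eventually (gt_mem_nhds (lt_add_of_pos_right c hε₀)),
    tendsto_fst.eventually ((tendsto_exp_nat_mul_atTop_zero
      (neg_neg_of_pos hε₀)).eventually_le_const one_half_pos)] with z hz hhalf s hlo hhi
  have hn : (0 : ℝ) ≤ z.1 := z.1.cast_nonneg
  have hs : Real.exp (s + z.1 * -ε) ≤ Real.exp s / 2 := by
    rw [Real.exp_add]
    linarith [mul_le_mul_of_nonneg_left hhalf (Real.exp_pos s).le]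
  have hleft : Real.exp (z.1 * ((1 - θ) * (μ + ε) - ε) + θ * s) ≤ Real.exp (s + z.1 * -ε) :=
    Real.exp_le_exp.2 (by linarith [mul_le_mul_of_nonneg_left hhi.le (sub_nonneg.2 hθ)])
  have hright : Real.exp (z.1 * z.2) ≤ Real.exp (s + z.1 * -ε) := Real.exp_le_exp.2 (by
    linarith [mul_le_mul_of_nonneg_left (show z.2 ≤ μ - ε - ε by linarith) hn])
  exact le_max_of_le_right (by linarith)

end IsDichotomy

end Dichotomies

section Comparison

open Filter Topology

variable {ι κ : Type*} [Fintype ι] [Fintype κ] {p₁ p₂ : ι → ℝ} {q₁ q₂ : κ → ℝ}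

/-- For `z = (n, x)`, the hockey-stick sums of the `n`-fold powers of `(q₁, q₂)` and `(p₁, p₂)` at
the threshold `exp (n * x)` are ordered. -/
def HockeyStickPowLE (q₁ q₂ : κ → ℝ) (p₁ p₂ : ι → ℝ) (z : ℕ × ℝ) : Prop :=
  hockeyStick (kpow q₁ z.1) (kpow q₂ z.1) (Real.exp (z.1 * z.2)) ≤
    hockeyStick (kpow p₁ z.1) (kpow p₂ z.1) (Real.exp (z.1 * z.2))

/-- The strict ordering of all Rényi divergences of order in `[1, ∞]`, in terms of the
log-likelihood ratios: `finCgf` encodes the finite orders `θ > 1`, `tiltedMean` the order `1`, and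
the bound `B` the order `∞`. -/
structure UpperRenyiLT (q₁ q₂ : κ → ℝ) (p₁ p₂ : ι → ℝ) : Prop where
  finCgf_lt : ∀ θ > 1, finCgf q₂ (llr q₁ q₂) θ < finCgf p₂ (llr p₁ p₂) θ
  tiltedMean_lt : tiltedMean q₂ (llr q₁ q₂) 1 < tiltedMean p₂ (llr p₁ p₂) 1
  exists_llr_bound : ∃ B, (∀ j, q₂ j ≠ 0 → llr q₁ q₂ j ≤ B) ∧ ∃ i, p₂ i ≠ 0 ∧ B < llr p₁ p₂ i

lemma hockeyStickPowLE_iff_overlap_le (hp : IsDichotomy p₁ p₂) (hq : IsDichotomy q₁ q₂)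
    (z : ℕ × ℝ) : HockeyStickPowLE q₁ q₂ p₁ p₂ z ↔
      overlap (kpow p₁ z.1) (kpow p₂ z.1) (Real.exp (z.1 * z.2)) ≤
        overlap (kpow q₁ z.1) (kpow q₂ z.1) (Real.exp (z.1 * z.2)) := by
  rw [HockeyStickPowLE, eq_sub_of_add_eq (hockeyStick_add_overlap (kpow q₁ z.1) _ _),
    eq_sub_of_add_eq (hockeyStick_add_overlap (kpow p₁ z.1) _ _), (hq.left.kpow _).2,
    (hp.left.kpow _).2, sub_le_sub_iff_left]

lemma hockeyStickPowLE_swap_iff (hp : IsDichotomy p₁ p₂) (hq : IsDichotomy q₁ q₂)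
    (z : ℕ × ℝ) :
    HockeyStickPowLE q₂ q₁ p₂ p₁ (z.1, -z.2) ↔ HockeyStickPowLE q₁ q₂ p₁ p₂ z := by
  rw [hockeyStickPowLE_iff_overlap_le hp hq, hockeyStickPowLE_iff_overlap_le hp.symm hq.symm,
    overlap_swap (kpow p₁ z.1) _ (Real.exp_pos _), overlap_swap (kpow q₁ z.1) _ (Real.exp_pos _),
    mul_le_mul_iff_right₀ (Real.exp_pos _), ← Real.exp_neg, mul_neg]

lemma eventually_exp_nat_mul_le {a b c e : ℝ} (h : a + b * c < e) :
    ∀ᶠ z : ℕ × ℝ in atTop ×ˢ 𝓝 c, Real.exp (z.1 * (a + b * z.2)) ≤ Real.exp (z.1 * e) := by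
  have hcont : Continuous fun x => a + b * x := by fun_prop
  filter_upwards [tendsto_snd.eventually ((hcont.tendsto c).eventually_lt_const h)] with z hz
  exact Real.exp_le_exp.2 (mul_le_mul_of_nonneg_left hz.le z.1.cast_nonneg)

/-- Chernoff's upper bound for `q₁, q₂` is compared with Cramér's lower bound for `p₁, p₂`, taken at
the tilt `θ₀` for which `llr p₁ p₂` has mean `c`. -/
lemma eventually_hockeyStickPowLE_of_tiltedMean_le (hp : IsDichotomy p₁ p₂)
    (hq : IsDichotomy q₁ q₂) (h : UpperRenyiLT q₁ q₂ p₁ p₂) {c : ℝ}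
    (hc : tiltedMean p₂ (llr p₁ p₂) 1 ≤ c) {i : ι} (hi : p₂ i ≠ 0) (hci : c < llr p₁ p₂ i) :
    ∀ᶠ z in atTop ×ˢ 𝓝 c, HockeyStickPowLE q₁ q₂ p₁ p₂ z := by
  obtain ⟨θ₀, hθ₀, hmean, hgt⟩ :=
    exists_greatest_tiltedMean_eq hp.right ((hp.right.1 i).lt_of_ne' hi) hci hc
  obtain ⟨θ, hθ, hlt⟩ : ∃ θ ≥ 1, finCgf q₂ (llr q₁ q₂) θ + (1 - θ) * c <
      finCgf p₂ (llr p₁ p₂) θ₀ + (1 - θ₀) * c := by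
    rcases hθ₀.eq_or_lt with rfl | hθ₀
    · obtain ⟨θ, hlt, hθ⟩ := ((eventually_finCgf_lt_nhdsGT hq.right
        (h.tiltedMean_lt.trans_le hc)).and self_mem_nhdsWithin).exists
      rw [hq.finCgf_one] at hlt
      exact ⟨θ, hθ.le, by rw [hp.finCgf_one]; linarith⟩
    · exact ⟨θ₀, hθ₀.le, by linarith [h.finCgf_lt θ₀ hθ₀]⟩
  obtain ⟨e, he, he₀⟩ := exists_between hlt
  have hrate : Continuous fun η =>
      finCgf p₂ (llr p₁ p₂) η + (1 - η) * tiltedMean p₂ (llr p₁ p₂) η :=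
    (continuous_finCgf hp.right _).add
      ((continuous_const.sub continuous_id).mul (continuous_tiltedMean hp.right _))
  obtain ⟨η, hη, hη₀⟩ := (((hrate.tendsto θ₀).mono_left nhdsWithin_le_nhds |>.eventually_const_lt
    (hmean ▸ he₀)).and (self_mem_nhdsWithin (s := Set.Ioi θ₀))).exists
  filter_upwards [eventually_exp_nat_mul_le he,
    hp.eventually_exp_le_hockeyStick_kpow (hθ₀.trans hη₀.le) (hgt η hη₀) hη] with z hupper hlower
  exact (hq.hockeyStick_kpow_le hθ _ _).trans (hupper.trans hlower)

lemma eventually_hockeyStickPowLE_of_le_tiltedMean (hp : IsDichotomy p₁ p₂)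
    (hq : IsDichotomy q₁ q₂) (h : UpperRenyiLT q₂ q₁ p₂ p₁) {c : ℝ}
    (hc : c ≤ tiltedMean p₂ (llr p₁ p₂) 0) {i : ι} (hi : p₁ i ≠ 0) (hci : -c < llr p₂ p₁ i) :
    ∀ᶠ z in atTop ×ˢ 𝓝 c, HockeyStickPowLE q₁ q₂ p₁ p₂ z := by
  have hmean : tiltedMean p₁ (llr p₂ p₁) 1 ≤ -c := by
    rw [hp.tiltedMean_swap, sub_self]
    exact neg_le_neg hc
  have hswap := (tendsto_id.prodMap (continuous_neg.tendsto c)).eventually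
    (eventually_hockeyStickPowLE_of_tiltedMean_le hp.symm hq.symm h hmean hi hci)
  exact hswap.mono fun z => (hockeyStickPowLE_swap_iff hp hq z).1

/-- Chernoff's rate for the overlap of `p₁, p₂` beats the Cramér rate for that of `q₁, q₂`. If `c`
lies outside the range of means of `llr q₁ q₂`, the latter is the trivial rate `0` or `c`. -/
lemma exists_overlap_rate_lt (hp : IsDichotomy p₁ p₂) (hq : IsDichotomy q₁ q₂)
    (h : ∀ θ ∈ Set.Ioo (0 : ℝ) 1, finCgf p₂ (llr p₁ p₂) θ < finCgf q₂ (llr q₁ q₂) θ) {c : ℝ}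
    (hc₀ : tiltedMean p₂ (llr p₁ p₂) 0 < c) (hc₁ : c < tiltedMean p₂ (llr p₁ p₂) 1) :
    ∃ η ∈ Set.Icc (0 : ℝ) 1, ∃ θ ∈ Set.Icc (0 : ℝ) 1,
      finCgf p₂ (llr p₁ p₂) η + (1 - η) * c < finCgf q₂ (llr q₁ q₂) θ +
        min ((1 - θ) * tiltedMean q₂ (llr q₁ q₂) θ)
          (c - θ * tiltedMean q₂ (llr q₁ q₂) θ) := by
  by_cases hq₁ : tiltedMean q₂ (llr q₁ q₂) 1 ≤ c
  · obtain ⟨η, hlt, hη⟩ := ((eventually_finCgf_lt_nhdsLT hp.right hc₁).and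
      (Ioo_mem_nhdsLT zero_lt_one)).exists
    refine ⟨η, Set.Ioo_subset_Icc_self hη, 1, Set.right_mem_Icc.2 zero_le_one, ?_⟩
    rw [hp.finCgf_one] at hlt
    rw [hq.finCgf_one, sub_self, zero_mul, one_mul, min_eq_left (sub_nonneg.2 hq₁)]
    linarith
  by_cases hq₀ : c ≤ tiltedMean q₂ (llr q₁ q₂) 0
  · obtain ⟨η, hlt, hη⟩ := ((eventually_finCgf_lt_nhdsGT hp.right hc₀).and
      (Ioo_mem_nhdsGT zero_lt_one)).exists
    refine ⟨η, Set.Ioo_subset_Icc_self hη, 0, Set.left_mem_Icc.2 zero_le_one, ?_⟩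
    rw [finCgf_zero hp.right] at hlt
    rw [finCgf_zero hq.right, sub_zero, one_mul, zero_mul, sub_zero, min_eq_right hq₀]
    linarith
  obtain ⟨θ, hθ, hmean⟩ := intermediate_value_Ioo zero_le_one
    (continuous_tiltedMean hq.right (llr q₁ q₂)).continuousOn ⟨not_le.1 hq₀, not_le.1 hq₁⟩
  have hθ' := Set.Ioo_subset_Icc_self hθ
  refine ⟨θ, hθ', θ, hθ', ?_⟩
  rw [hmean, min_eq_left (by linarith)]
  exact add_lt_add_left (h θ hθ) _

lemma eventually_hockeyStickPowLE_of_tiltedMean_lt (hp : IsDichotomy p₁ p₂)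
    (hq : IsDichotomy q₁ q₂)
    (h : ∀ θ ∈ Set.Ioo (0 : ℝ) 1, finCgf p₂ (llr p₁ p₂) θ < finCgf q₂ (llr q₁ q₂) θ) {c : ℝ}
    (hc₀ : tiltedMean p₂ (llr p₁ p₂) 0 < c) (hc₁ : c < tiltedMean p₂ (llr p₁ p₂) 1) :
    ∀ᶠ z in atTop ×ˢ 𝓝 c, HockeyStickPowLE q₁ q₂ p₁ p₂ z := by
  obtain ⟨η, hη, θ, hθ, hlt⟩ := exists_overlap_rate_lt hp hq h hc₀ hc₁
  obtain ⟨e, he, he'⟩ := exists_between hlt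
  filter_upwards [eventually_exp_nat_mul_le he,
    hq.eventually_exp_le_overlap_kpow hθ.1 hθ.2 he'] with z hupper hlower
  rw [hockeyStickPowLE_iff_overlap_le hp hq]
  exact (hp.overlap_kpow_le hη.1 hη.2 _ _).trans (hupper.trans hlower)

lemma hockeyStickPowLE_of_llr_le (hq : IsDichotomy q₁ q₂) {x : ℝ}
    (hx : ∀ j, q₂ j ≠ 0 → llr q₁ q₂ j ≤ x) (p₁ p₂ : ι → ℝ) (n : ℕ) :
    HockeyStickPowLE q₁ q₂ p₁ p₂ (n, x) := by
  have hzero : hockeyStick (kpow q₁ n) (kpow q₂ n) (Real.exp (n * x)) = 0 := by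
    rw [hq.hockeyStick_kpow_exp]
    refine Finset.sum_eq_zero fun f _ => mul_eq_zero.2 (or_iff_not_imp_left.2 fun hf => ?_)
    have hsum : iidSum (llr q₁ q₂) n f ≤ n * x :=
      (Finset.sum_le_card_nsmul _ _ x fun k hk => hx _ (Finset.prod_ne_zero_iff.1 hf k hk)).trans_eq
        (by simp)
    exact max_eq_left (sub_nonpos.2 (Real.exp_le_exp.2 hsum))
  exact hzero.trans_le (Finset.sum_nonneg fun f _ => le_max_left _ _)

lemma eventually_forall_hockeyStickPowLE (hp : IsDichotomy p₁ p₂) (hq : IsDichotomy q₁ q₂)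
    (hup : UpperRenyiLT q₁ q₂ p₁ p₂) (hdown : UpperRenyiLT q₂ q₁ p₂ p₁)
    (hmid : ∀ θ ∈ Set.Ioo (0 : ℝ) 1, finCgf p₂ (llr p₁ p₂) θ < finCgf q₂ (llr q₁ q₂) θ) :
    ∀ᶠ n : ℕ in atTop, ∀ x, HockeyStickPowLE q₁ q₂ p₁ p₂ (n, x) := by
  obtain ⟨B, hB, i, hi, hBi⟩ := hup.exists_llr_bound
  obtain ⟨A, hA, k, hk, hAk⟩ := hdown.exists_llr_bound
  have hlocal : ∀ c ∈ Set.Icc (-A) B, ∀ᶠ z in atTop ×ˢ 𝓝 c, HockeyStickPowLE q₁ q₂ p₁ p₂ z := by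
    rintro c ⟨hAc, hcB⟩
    rcases le_or_gt (tiltedMean p₂ (llr p₁ p₂) 1) c with hc₁ | hc₁
    · exact eventually_hockeyStickPowLE_of_tiltedMean_le hp hq hup hc₁ hi (hcB.trans_lt hBi)
    rcases le_or_gt c (tiltedMean p₂ (llr p₁ p₂) 0) with hc₀ | hc₀
    · exact eventually_hockeyStickPowLE_of_le_tiltedMean hp hq hdown hc₀ hk (by linarith)
    · exact eventually_hockeyStickPowLE_of_tiltedMean_lt hp hq hmid hc₀ hc₁
  have hcompact := isCompact_Icc.mem_prod_nhdsSet_of_forall hlocal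
  filter_upwards [Eventually.curry hcompact] with n hn x
  rcases lt_or_ge B x with hBx | hxB
  · exact hockeyStickPowLE_of_llr_le hq (fun j hj => (hB j hj).trans hBx.le) _ _ _
  rcases lt_or_ge x (-A) with hxA | hAx
  · exact (hockeyStickPowLE_swap_iff hp hq (n, x)).1
      (hockeyStickPowLE_of_llr_le hq.symm (fun j hj => (hA j hj).trans (by linarith)) _ _ _)
  · exact hn.self_of_nhdsSet x ⟨hAx, hxB⟩

lemma hockeyStick_of_nonpos {p q : ι → ℝ} (hp : IsProbVec p) (hq : IsProbVec q) {t : ℝ}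
    (ht : t ≤ 0) : hockeyStick p q t = 1 - t := by
  have hpoint : ∀ i, max 0 (p i - t * q i) = p i - t * q i := fun i =>
    max_eq_right (sub_nonneg.2 ((mul_nonpos_of_nonpos_of_nonneg ht (hq.1 i)).trans (hp.1 i)))
  simp only [hockeyStick, hpoint, Finset.sum_sub_distrib, ← Finset.mul_sum, hp.2, hq.2, mul_one]

lemma eventually_hockeyStick_kpow_le (hp : IsDichotomy p₁ p₂) (hq : IsDichotomy q₁ q₂)
    (hup : UpperRenyiLT q₁ q₂ p₁ p₂) (hdown : UpperRenyiLT q₂ q₁ p₂ p₁)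
    (hmid : ∀ θ ∈ Set.Ioo (0 : ℝ) 1, finCgf p₂ (llr p₁ p₂) θ < finCgf q₂ (llr q₁ q₂) θ) :
    ∀ᶠ n : ℕ in atTop, ∀ t,
      hockeyStick (kpow q₁ n) (kpow q₂ n) t ≤ hockeyStick (kpow p₁ n) (kpow p₂ n) t := by
  filter_upwards [eventually_forall_hockeyStickPowLE hp hq hup hdown hmid,
    eventually_ne_atTop 0] with n hn hn₀ t
  rcases le_or_gt t 0 with ht | ht
  · rw [hockeyStick_of_nonpos (hq.left.kpow n) (hq.right.kpow n) ht,
      hockeyStick_of_nonpos (hp.left.kpow n) (hp.right.kpow n) ht]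
  · have hexp : Real.exp (n * (Real.log t / n)) = t := by
      rw [mul_div_cancel₀ _ (Nat.cast_ne_zero.2 hn₀), Real.exp_log ht]
    exact hexp ▸ hn (Real.log t / n)

end Comparison

section RenyiDivergences

variable {m : ℕ} {p q : Fin m → ℝ}

lemma IsDichotomy.renyi_eq (h : IsDichotomy p q) {α : ℝ} (hα : α ≠ 1) :
    Renyi α p q = (1 / (α - 1)) * finCgf q (llr p q) α := by
  rw [Renyi, if_neg hα, finCgf, finMgf]
  congr 2
  refine Finset.sum_congr rfl fun i _ => ?_
  split_ifs with hp
  · rw [not_not.1 (mt (h.ne_zero_iff i).2 (not_not.2 hp)), zero_mul]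
  · have hq : 0 < q i := (h.right.1 i).lt_of_ne' ((h.ne_zero_iff i).1 hp)
    rw [← h.mul_exp_llr, Real.mul_rpow hq.le (Real.exp_pos _).le, ← Real.exp_mul, mul_right_comm,
      ← Real.rpow_add hq, add_sub_cancel, Real.rpow_one, mul_comm α]

lemma IsDichotomy.renyi_one (h : IsDichotomy p q) :
    Renyi 1 p q = tiltedMean q (llr p q) 1 := by
  have hmgf : finMgf q (llr p q) 1 = 1 := by
    simp only [finMgf, one_mul, h.mul_exp_llr, h.left.2]
  simp only [Renyi, if_true, tiltedMean, tilt, hmgf, one_mul, div_one, h.mul_exp_llr]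
  rfl

lemma llr_le_renyiInf (p : Fin m → ℝ) {i : Fin m} (hi : q i ≠ 0) : llr p q i ≤ RenyiInf p q := by
  have hle := le_ciSup (f := fun i => ⨆ _ : i ∈ Finset.univ.filter (fun i => q i ≠ 0),
    Real.log (p i / q i)) (Set.finite_range _).bddAbove i
  rwa [ciSup_pos (Finset.mem_filter.2 ⟨Finset.mem_univ i, hi⟩)] at hle

lemma IsDichotomy.renyiInf_nonneg (h : IsDichotomy p q) : 0 ≤ RenyiInf p q := by
  have hsum : ∑ i, p i ≤ (∑ i, q i) * Real.exp (RenyiInf p q) := by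
    rw [Finset.sum_mul]
    refine Finset.sum_le_sum fun i _ => ?_
    by_cases hi : q i = 0
    · rw [← h.mul_exp_llr, hi, zero_mul, zero_mul]
    · rw [← h.mul_exp_llr]
      exact mul_le_mul_of_nonneg_left (Real.exp_le_exp.2 (llr_le_renyiInf p hi)) (h.right.1 i)
  rwa [h.left.2, h.right.2, one_mul, Real.one_le_exp_iff] at hsum

/-- Off the support of `q` the inner supremum in `RenyiInf` is over an empty type and contributes
the junk value `0` to the outer one. -/
lemma exists_lt_llr_of_lt_renyiInf [Nonempty (Fin m)] {x : ℝ} (hx : 0 ≤ x)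
    (h : x < RenyiInf p q) : ∃ i, q i ≠ 0 ∧ x < llr p q i := by
  obtain ⟨i, hi⟩ := exists_lt_of_lt_ciSup h
  by_cases hq : i ∈ Finset.univ.filter (fun i => q i ≠ 0)
  · rw [ciSup_pos hq] at hi
    exact ⟨i, (Finset.mem_filter.1 hq).2, hi⟩
  · have : IsEmpty (i ∈ Finset.univ.filter (fun i => q i ≠ 0)) := ⟨hq⟩
    rw [Real.iSup_of_isEmpty] at hi
    exact absurd hi hx.not_gt

variable {m' : ℕ} {p₁ p₂ : Fin m → ℝ} {q₁ q₂ : Fin m' → ℝ}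

lemma UpperRenyiLT.of_renyi_lt (hp : IsDichotomy p₁ p₂) (hq : IsDichotomy q₁ q₂)
    (h : ∀ α ≥ 1, Renyi α q₁ q₂ < Renyi α p₁ p₂) (hinf : RenyiInf q₁ q₂ < RenyiInf p₁ p₂) :
    UpperRenyiLT q₁ q₂ p₁ p₂ where
  finCgf_lt θ hθ := by
    have hlt := h θ hθ.le
    rw [hp.renyi_eq hθ.ne', hq.renyi_eq hθ.ne'] at hlt
    exact lt_of_mul_lt_mul_left hlt (one_div_nonneg.2 (sub_nonneg.2 hθ.le))
  tiltedMean_lt := by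
    rw [← hp.renyi_one, ← hq.renyi_one]
    exact h 1 le_rfl
  exists_llr_bound := by
    obtain ⟨i, -⟩ := hp.left.exists_pos
    have : Nonempty (Fin m) := ⟨i⟩
    exact ⟨RenyiInf q₁ q₂, fun j => llr_le_renyiInf q₁,
      exists_lt_llr_of_lt_renyiInf hq.renyiInf_nonneg hinf⟩

lemma finCgf_lt_of_renyi_lt (hp : IsDichotomy p₁ p₂) (hq : IsDichotomy q₁ q₂) {α : ℝ} (hα : α < 1)
    (h : Renyi α q₁ q₂ < Renyi α p₁ p₂) :
    finCgf p₂ (llr p₁ p₂) α < finCgf q₂ (llr q₁ q₂) α := by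
  rw [hp.renyi_eq hα.ne, hq.renyi_eq hα.ne] at h
  exact lt_of_mul_lt_mul_of_nonpos_left h (one_div_nonpos.2 (sub_nonpos.2 hα.le))

/-- The orders below `1/2` follow from those above by the symmetry `α ↦ 1 - α`. -/
lemma finCgf_lt_of_forall_renyi_lt (hp : IsDichotomy p₁ p₂) (hq : IsDichotomy q₁ q₂)
    (h : ∀ α ≥ 1 / 2, Renyi α q₁ q₂ < Renyi α p₁ p₂)
    (h' : ∀ α ≥ 1 / 2, Renyi α q₂ q₁ < Renyi α p₂ p₁) :
    ∀ θ ∈ Set.Ioo (0 : ℝ) 1, finCgf p₂ (llr p₁ p₂) θ < finCgf q₂ (llr q₁ q₂) θ := by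
  rintro θ ⟨hθ₀, hθ₁⟩
  rcases le_total (1 / 2) θ with hθ | hθ
  · exact finCgf_lt_of_renyi_lt hp hq hθ₁ (h θ hθ)
  · rw [hp.symm.finCgf_swap, hq.symm.finCgf_swap]
    exact finCgf_lt_of_renyi_lt hp.symm hq.symm (sub_lt_self 1 hθ₀)
      (h' (1 - θ) (by linarith))

end RenyiDivergences

/-- **Asymptotic relative majorization (d = 2), sufficiency.**  If all Rényi
divergences of order `α ∈ [1/2, ∞]` (including the Kullback–Leibler divergence
at `α = 1` and the max-divergence at `α = ∞`) are strictly ordered in both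
argument orders, then for every sufficiently large `n` a single stochastic
matrix carries `(p⁽¹⁾)^{⊗n}` to `(q⁽¹⁾)^{⊗n}` and `(p⁽²⁾)^{⊗n}` to
`(q⁽²⁾)^{⊗n}`. -/
theorem relative_majorization_sufficient
    {m m' : ℕ} (p1 p2 : Fin m → ℝ) (q1 q2 : Fin m' → ℝ)
    (hp1 : IsProbVec p1) (hp2 : IsProbVec p2)
    (hq1 : IsProbVec q1) (hq2 : IsProbVec q2)
    (hps : ∀ i, p1 i ≠ 0 ↔ p2 i ≠ 0) (hqs : ∀ j, q1 j ≠ 0 ↔ q2 j ≠ 0)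
    (hR : ∀ α : ℝ, 1 / 2 ≤ α →
      Renyi α q1 q2 < Renyi α p1 p2 ∧ Renyi α q2 q1 < Renyi α p2 p1)
    (hRinf : RenyiInf q1 q2 < RenyiInf p1 p2 ∧ RenyiInf q2 q1 < RenyiInf p2 p1) :
    ∃ N : ℕ, ∀ n : ℕ, N ≤ n →
      ∃ T : (Fin n → Fin m') → (Fin n → Fin m) → ℝ,
        IsStochastic T ∧ matVec T (kpow p1 n) = kpow q1 n ∧
          matVec T (kpow p2 n) = kpow q2 n := by
  have hp : IsDichotomy p1 p2 := ⟨hp1, hp2, hps⟩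
  have hq : IsDichotomy q1 q2 := ⟨hq1, hq2, hqs⟩
  have hup : UpperRenyiLT q1 q2 p1 p2 :=
    .of_renyi_lt hp hq (fun α hα => (hR α (by linarith)).1) hRinf.1
  have hdown : UpperRenyiLT q2 q1 p2 p1 :=
    .of_renyi_lt hp.symm hq.symm (fun α hα => (hR α (by linarith)).2) hRinf.2
  have hmid := finCgf_lt_of_forall_renyi_lt hp hq (fun α hα => (hR α hα).1)
    fun α hα => (hR α hα).2
  obtain ⟨N, hN⟩ :=
    Filter.eventually_atTop.1 (eventually_hockeyStick_kpow_le hp hq hup hdown hmid)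
  obtain ⟨j, -⟩ := hq1.exists_pos
  refine ⟨N, fun n hn => ?_⟩
  have : Nonempty (Fin n → Fin m') := ⟨fun _ => j⟩
  exact exists_isStochastic_of_hockeyStick_le (hp2.kpow n).1 (hq2.kpow n).1
    ((hq1.kpow n).2.trans (hp1.kpow n).2.symm) ((hq2.kpow n).2.trans (hp2.kpow n).2.symm)
    (hN n hn)
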